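/- Let B be the real 6×6 matrix B = (1/2)·M where M has rows (0, 2+√2, 0, (√2−6)/4, 0, (−2−5√2)/4), (−2−√2, 0, √2, 0, 1+√2, 0), (0, (√2−6)/4, 0, 2−√2, 0, (3√2−2)/4), (√2, 0, √2−2, 0, −1, 0), (0, (−2−5√2)/4, 0, (3√2−2)/4, 0, 1+1/√2), (1+√2, 0, −1, 0, −1−1/√2, 0). Set ω₁ := (1/2)·√(35/2 + 9√2). Then the characteristic polynomial of B equals λ⁴·(λ² + ω₁²); i.e., the eigenvalues of B are 0 with algebraic multiplicity 4 and the complex-conjugate pair ±iω₁. -/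

import Mathlib

open Polynomial

/-- The coefficient matrix of the linearized equations of motion about the coplanar ground
state for the sign-inverted standard couplings `J₁ = 1/2`, `J₂ = −(1+√2)/2`, `J₃ = −√2/2`. -/
noncomputable def linMatB : Matrix (Fin 6) (Fin 6) ℝ :=
  (1 / 2 : ℝ) •
    !![0, 2 + Real.sqrt 2, 0, (Real.sqrt 2 - 6) / 4, 0, (-2 - 5 * Real.sqrt 2) / 4;
       -2 - Real.sqrt 2, 0, Real.sqrt 2, 0, 1 + Real.sqrt 2, 0;
       0, (Real.sqrt 2 - 6) / 4, 0, 2 - Real.sqrt 2, 0, (3 * Real.sqrt 2 - 2) / 4;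
       Real.sqrt 2, 0, Real.sqrt 2 - 2, 0, -1, 0;
       0, (-2 - 5 * Real.sqrt 2) / 4, 0, (3 * Real.sqrt 2 - 2) / 4, 0, 1 + 1 / Real.sqrt 2;
       1 + Real.sqrt 2, 0, -1, 0, -1 - 1 / Real.sqrt 2, 0]

/-!
`B` couples only coordinates of opposite parity, so after sorting the indices by parity it becomes
`(0 P; Q 0)`, and `det (λ - B) = det (λ² - P Q)`. Here `Q = u wᵀ` has rank one, hence so has
`P Q = (P u) wᵀ`, whose characteristic polynomial is `μ³ - (wᵀ P u) μ²`. Substituting `μ = λ²`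
gives the quadruple zero eigenvalue, and `ω₁² = -wᵀ P u`.
-/

section BlockAntidiagonal

open Matrix

variable {R m n : Type*} [CommRing R] [Fintype m] [DecidableEq m] [Fintype n] [DecidableEq n]

lemma expand_charpoly (k : ℕ) (A : Matrix n n R) :
    expand R k A.charpoly = (scalar n (X ^ k) - A.map C).det := by
  have hmap : (expand R k).mapMatrix A.charmatrix = scalar n (X ^ k) - A.map C := by
    ext i j : 1
    simp [charmatrix_apply, diagonal_apply, apply_ite (expand R k)]
  rw [charpoly, AlgHom.map_det, hmap]

lemma X_pow_mul_charpoly_fromBlocks_zero₁₁_zero₂₂ (P : Matrix m n R) (Q : Matrix n m R) :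
    X ^ Fintype.card m * (fromBlocks 0 P Q 0).charpoly =
      X ^ Fintype.card n * expand R 2 (P * Q).charpoly := by
  have hmul : (fromBlocks 0 P Q 0).charmatrix * fromBlocks (scalar m X) 0 (Q.map C) 1 =
      fromBlocks (scalar m (X ^ 2) - (P * Q).map C) (-P.map C) 0 (scalar n X) := by
    simp [charmatrix_fromBlocks, fromBlocks_multiply, sub_eq_add_neg, sq,
      smul_eq_mul_diagonal, ← smul_eq_diagonal_mul]
  have hdet := congr_arg det hmul
  rw [det_mul, det_fromBlocks_zero₁₂, det_fromBlocks_zero₂₁, ← expand_charpoly] at hdet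
  simpa [charpoly, mul_comm] using hdet

lemma charpoly_fromBlocks_zero₁₁_zero₂₂ (P Q : Matrix n n R) :
    (fromBlocks 0 P Q 0).charpoly = expand R 2 (P * Q).charpoly :=
  (isRegular_X_pow _).left.eq_iff.mp <| X_pow_mul_charpoly_fromBlocks_zero₁₁_zero₂₂ P Q

lemma charpoly_fromBlocks_zero_vecMulVec (P : Matrix n n R) (u v : n → R) :
    (fromBlocks 0 P (vecMulVec u v) 0).charpoly =
      X ^ (2 * Fintype.card n) - C (P *ᵥ u ⬝ᵥ v) * X ^ (2 * (Fintype.card n - 1)) := by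
  rw [charpoly_fromBlocks_zero₁₁_zero₂₂, mul_vecMulVec, charpoly_vecMulVec]
  simp [smul_eq_C_mul, pow_mul]

end BlockAntidiagonal

/-- The equivalence listing the even indices `0, 2, …` of `Fin (n * 2)` on the left and the odd
indices `1, 3, …` on the right; it separates the two kinds of coordinates that `linMatB`
interleaves. -/
def evenOddEquiv (n : ℕ) : Fin n ⊕ Fin n ≃ Fin (n * 2) :=
  (Equiv.boolProdEquivSum (Fin n)).symm.trans <|
    (Equiv.prodComm Bool (Fin n)).trans <|
      ((Equiv.refl (Fin n)).prodCongr finTwoEquiv.symm).trans finProdFinEquiv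

/-- The block of `linMatB` with even row indices and odd column indices. -/
noncomputable def evenOddBlock : Matrix (Fin 3) (Fin 3) ℝ :=
  (1 / 2 : ℝ) •
    !![2 + √2, (√2 - 6) / 4, (-2 - 5 * √2) / 4;
       (√2 - 6) / 4, 2 - √2, (3 * √2 - 2) / 4;
       (-2 - 5 * √2) / 4, (3 * √2 - 2) / 4, 1 + 1 / √2]

/-- The block of `linMatB` with odd row indices and even column indices. -/
noncomputable def oddEvenBlock : Matrix (Fin 3) (Fin 3) ℝ :=
  (1 / 2 : ℝ) •
    !![-2 - √2, √2, 1 + √2;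
       √2, √2 - 2, -1;
       1 + √2, -1, -1 - 1 / √2]

/-- The vector spanning the range of the rank-one matrix `oddEvenBlock`, normalized to have last
coordinate `1`. -/
noncomputable def oddEvenVec : Fin 3 → ℝ :=
  ![-√2, 2 - √2, 1]

lemma linMatB_eq_reindex_fromBlocks :
    linMatB = Matrix.reindex (evenOddEquiv 3) (evenOddEquiv 3)
      (Matrix.fromBlocks 0 evenOddBlock oddEvenBlock 0) := by
  rw [← Equiv.symm_apply_eq]
  ext (i | i) (j | j)
  · fin_cases i <;> fin_cases j <;> exact mul_zero _
  · fin_cases i <;> fin_cases j <;> rfl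
  · fin_cases i <;> fin_cases j <;> rfl
  · fin_cases i <;> fin_cases j <;> exact mul_zero _

lemma oddEvenBlock_eq_vecMulVec :
    oddEvenBlock = Matrix.vecMulVec (-((2 + √2) / 4) • oddEvenVec) oddEvenVec := by
  have hsq : √2 ^ 2 = 2 := Real.sq_sqrt zero_le_two
  rw [oddEvenBlock, oddEvenVec, ← Real.sqrt_div_self']
  ext i j
  fin_cases i <;> fin_cases j <;>
    simp only [Matrix.smul_apply, Matrix.vecMulVec_apply, Pi.smul_apply, smul_eq_mul,
      Matrix.of_apply, Matrix.cons_val, Fin.reduceFinMk, Fin.mk_one, Fin.zero_eta] <;>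
    grind

lemma evenOddBlock_mulVec_oddEvenVec :
    evenOddBlock.mulVec oddEvenVec =
      (1 / 8 : ℝ) • ![-24 - 5 * √2, 20 - 7 * √2, 4 + 12 * √2] := by
  have hsq : √2 ^ 2 = 2 := Real.sq_sqrt zero_le_two
  rw [evenOddBlock, oddEvenVec, ← Real.sqrt_div_self', Matrix.smul_mulVec]
  ext i
  fin_cases i <;>
    simp only [Matrix.mulVec, dotProduct, Fin.sum_univ_three, Pi.smul_apply, smul_eq_mul,
      Matrix.of_apply, Matrix.cons_val, Fin.reduceFinMk, Fin.mk_one, Fin.zero_eta] <;>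
    grind

lemma evenOddBlock_mulVec_smul_dotProduct_oddEvenVec :
    evenOddBlock.mulVec (-((2 + √2) / 4) • oddEvenVec) ⬝ᵥ oddEvenVec =
      -((1 / 2) * √(35 / 2 + 9 * √2)) ^ 2 := by
  have hsq : √2 ^ 2 = 2 := Real.sq_sqrt zero_le_two
  have hdot : evenOddBlock.mulVec oddEvenVec ⬝ᵥ oddEvenVec = (34 + √2) / 4 := by
    rw [evenOddBlock_mulVec_oddEvenVec, oddEvenVec, smul_dotProduct, Matrix.vec3_dotProduct',
      smul_eq_mul]
    linear_combination 3 / 2 * hsq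
  rw [Matrix.mulVec_smul, smul_dotProduct, hdot, mul_pow, Real.sq_sqrt (by positivity),
    smul_eq_mul]
  linear_combination -hsq / 16

/-- the characteristic polynomial of the linearization matrix `B` is
`λ⁴(λ² + ω₁²)` with `ω₁ = (1/2)√(35/2 + 9√2)`; its eigenvalues are `0`
(multiplicity 4) and the pair `±iω₁`. -/
theorem charpoly_linMatB :
    linMatB.charpoly =
      X ^ 4 * (X ^ 2 + C (((1 / 2) * Real.sqrt (35 / 2 + 9 * Real.sqrt 2)) ^ 2)) := by
  rw [linMatB_eq_reindex_fromBlocks, Matrix.charpoly_reindex, oddEvenBlock_eq_vecMulVec,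
    charpoly_fromBlocks_zero_vecMulVec, evenOddBlock_mulVec_smul_dotProduct_oddEvenVec, C_neg,
    Fintype.card_fin]
  ring
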